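/- arXiv:2406.10716 — 5 statements merged into one kernel-verified Lean document; each statement's English description precedes it below -/
import Mathlib

section
/- Let f : [0,1] → ℝ be quasi-continuous at every point of [0,1]. Then the set C_f of points of [0,1] at which f is continuous is dense in [0,1]. -/
open Set Filter Topology

/-- `f` is quasi-continuous at `x₀` (relative to the domain `[0,1]`): for every `ε > 0`
and every open `U ∋ x₀` there is a nonempty relatively open `G ⊆ U ∩ [0,1]` on which
`f` stays `ε`-close to `f x₀`. -/
def QuasiContinuousAt (f : ℝ → ℝ) (x₀ : ℝ) : Prop :=
  ∀ ε > (0:ℝ), ∀ U : Set ℝ, IsOpen U → x₀ ∈ U →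
    ∃ O : Set ℝ, IsOpen O ∧ (O ∩ Set.Icc 0 1).Nonempty ∧
      O ∩ Set.Icc 0 1 ⊆ U ∧ ∀ x ∈ O ∩ Set.Icc 0 1, |f x₀ - f x| < ε

/-- If `f : [0,1] → ℝ` is quasi-continuous at every point of `[0,1]`,
then the set of continuity points of `f` is dense in `[0,1]`. -/
theorem dense_continuity_points_of_quasiContinuous (f : ℝ → ℝ)
    (hf : ∀ x ∈ Set.Icc (0:ℝ) 1, QuasiContinuousAt f x) :
    Set.Icc (0:ℝ) 1 ⊆
      closure {x ∈ Set.Icc (0:ℝ) 1 | ContinuousWithinAt f (Set.Icc 0 1) x} := by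
  let W : ℕ → Set (Set.Icc (0:ℝ) 1) := fun n =>
    {x | ∃ O : Set ℝ, IsOpen O ∧ (x:ℝ) ∈ O ∧
      ∀ y ∈ O ∩ Set.Icc 0 1, ∀ z ∈ O ∩ Set.Icc 0 1, |f y - f z| < 1 / ((n:ℝ) + 1)}
  have hopen : ∀ n, IsOpen (W n) := by
    intro n
    rw [isOpen_iff_mem_nhds]
    rintro x ⟨O, hO, hx, h⟩
    have h1 : (Subtype.val ⁻¹' O : Set (Set.Icc (0:ℝ) 1)) ∈ 𝓝 x :=
      (hO.preimage continuous_subtype_val).mem_nhds hx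
    exact mem_of_superset h1 fun y hy => ⟨O, hO, hy, h⟩
  have hdense : ∀ n, Dense (W n) := by
    intro n
    rw [dense_iff_inter_open]
    rintro V hV ⟨x, hx⟩
    obtain ⟨U, hU, rfl⟩ := isOpen_induced_iff.mp hV
    have hpos : (0:ℝ) < 1 / ((n:ℝ) + 1) := by positivity
    obtain ⟨O, hO, ⟨y, hyO, hyI⟩, hOU, h⟩ := hf x x.2 _ (half_pos hpos) U hU hx
    refine ⟨⟨y, hyI⟩, hOU ⟨hyO, hyI⟩, O, hO, hyO, fun a ha b hb => ?_⟩
    have h1 := abs_lt.mp (h a ha)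
    have h2 := abs_lt.mp (h b hb)
    rw [abs_lt]
    constructor <;> linarith [h1.1, h1.2, h2.1, h2.2]
  have hD : Dense (⋂ n, W n) := dense_iInter_of_isOpen hopen hdense
  intro x hx
  rw [mem_closure_iff]
  intro U hU hxU
  obtain ⟨y, hyU, hyW⟩ := hD.inter_open_nonempty (Subtype.val ⁻¹' U)
    (hU.preimage continuous_subtype_val) ⟨⟨x, hx⟩, hxU⟩
  refine ⟨y, hyU, y.2, ?_⟩
  rw [ContinuousWithinAt, Metric.tendsto_nhds]
  intro ε hε
  obtain ⟨n, hn⟩ := exists_nat_one_div_lt hε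
  obtain ⟨O, hO, hyO, h⟩ := mem_iInter.mp hyW n
  filter_upwards [mem_nhdsWithin_of_mem_nhds (hO.mem_nhds hyO), self_mem_nhdsWithin] with z hz hzI
  rw [Real.dist_eq]
  exact (h z ⟨hz, hzI⟩ y ⟨hyO, y.2⟩).trans hn
end

section
/- A function f : [0,1] → ℝ is cliquish at every point of [0,1] if and only if the set C_f of points of [0,1] at which f is continuous is dense in [0,1]. -/
open Set Filter Topology

/-- `f` is cliquish at `x₀` (relative to the domain `[0,1]`): for every `ε > 0` and
every open `U ∋ x₀` there is a nonempty relatively open `G ⊆ U ∩ [0,1]` on which the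
values of `f` are pairwise `ε`-close. -/
def CliquishAt (f : ℝ → ℝ) (x₀ : ℝ) : Prop :=
  ∀ ε > (0:ℝ), ∀ U : Set ℝ, IsOpen U → x₀ ∈ U →
    ∃ O : Set ℝ, IsOpen O ∧ (O ∩ Set.Icc 0 1).Nonempty ∧
      O ∩ Set.Icc 0 1 ⊆ U ∧
      ∀ y ∈ O ∩ Set.Icc (0:ℝ) 1, ∀ z ∈ O ∩ Set.Icc (0:ℝ) 1, |f y - f z| < ε

/-- `f : [0,1] → ℝ` is cliquish at every point of `[0,1]` if and only if
the set of continuity points of `f` is dense in `[0,1]`. -/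
theorem cliquish_iff_dense_continuity_points (f : ℝ → ℝ) :
    (∀ x ∈ Set.Icc (0:ℝ) 1, CliquishAt f x) ↔
      Set.Icc (0:ℝ) 1 ⊆
        closure {x ∈ Set.Icc (0:ℝ) 1 | ContinuousWithinAt f (Set.Icc 0 1) x} := by
  constructor
  · intro h
    let W : ℕ → Set (Set.Icc (0:ℝ) 1) := fun n =>
      ⋃₀ {V | IsOpen V ∧ ∀ y ∈ V, ∀ z ∈ V, |f y - f z| < 1 / ((n:ℝ) + 1)}
    have hWo : ∀ n, IsOpen (W n) := fun n => isOpen_sUnion fun V hV => hV.1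
    have hWd : ∀ n, Dense (W n) := by
      intro n
      rw [dense_iff_inter_open]
      rintro U hU ⟨x, hx⟩
      obtain ⟨U', hU', rfl⟩ := isOpen_induced_iff.mp hU
      obtain ⟨O, hO, ⟨p, hpO, hpI⟩, hsub, hos⟩ :=
        h x x.2 (1 / ((n:ℝ) + 1)) (by positivity) U' hU' hx
      refine ⟨⟨p, hpI⟩, hsub ⟨hpO, hpI⟩, ?_⟩
      refine Set.mem_sUnion.mpr ⟨Subtype.val ⁻¹' O,
        ⟨hO.preimage continuous_subtype_val, ?_⟩, hpO⟩
      intro y hy z hz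
      exact hos y ⟨hy, y.2⟩ z ⟨hz, z.2⟩
    have hD : Dense (⋂ n, W n) := dense_iInter_of_isOpen hWo hWd
    intro x hx
    rw [mem_closure_iff]
    intro U hU hxU
    obtain ⟨p, hpU, hpW⟩ := hD.inter_open_nonempty (Subtype.val ⁻¹' U)
      (hU.preimage continuous_subtype_val) ⟨⟨x, hx⟩, hxU⟩
    refine ⟨p, hpU, p.2, ?_⟩
    rw [continuousWithinAt_iff_continuousAt_restrict f p.2, Metric.continuousAt_iff']
    intro ε hε
    obtain ⟨n, hn⟩ := exists_nat_one_div_lt hε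
    obtain ⟨V, ⟨hVo, hV⟩, hpV⟩ := Set.mem_sUnion.mp (Set.mem_iInter.mp hpW n)
    filter_upwards [hVo.mem_nhds hpV] with y hy
    rw [Real.dist_eq]
    exact (hV y hy p hpV).trans hn
  · intro h x hx ε hε U hU hxU
    obtain ⟨p, hpU, hpI, hc⟩ := mem_closure_iff.mp (h hx) U hU hxU
    rw [Metric.continuousWithinAt_iff] at hc
    obtain ⟨δ, hδ, hc⟩ := hc (ε / 2) (by positivity)
    refine ⟨U ∩ Metric.ball p δ, hU.inter Metric.isOpen_ball,
      ⟨p, ⟨hpU, Metric.mem_ball_self hδ⟩, hpI⟩, fun y hy => hy.1.1, ?_⟩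
    intro y hy z hz
    have h1 := hc hy.2 hy.1.2
    have h2 := hc hz.2 hz.1.2
    have h3 := dist_triangle_right (f y) (f z) (f p)
    rw [← Real.dist_eq]
    linarith
end

section
/- (Volterra's corollary) There is no function f : [0,1] → ℝ that is continuous at every rational point of [0,1] and discontinuous at every irrational point of [0,1]; i.e., no f : [0,1] → ℝ has C_f = ℚ ∩ [0,1]. -/
open Set Filter Topology

/-- Volterra's corollary: no `f : [0,1] → ℝ` is continuous at every
rational point of `[0,1]` and discontinuous at every irrational point of `[0,1]`. -/
theorem volterra_corollary :
    ¬ ∃ f : ℝ → ℝ,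
      {x ∈ Set.Icc (0:ℝ) 1 | ContinuousWithinAt f (Set.Icc 0 1) x} =
        Set.Icc (0:ℝ) 1 ∩ Set.range ((↑) : ℚ → ℝ) := by
  rintro ⟨f, hf⟩
  have hG : IsGδ ({x | ContinuousAt f x} ∪ (Iic (0:ℝ) ∪ Ici 1)) :=
    (IsGδ.setOfPred_continuousAt f).union (isClosed_Iic.isGδ.union isClosed_Ici.isGδ)
  have hD : Dense ({x | ContinuousAt f x} ∪ (Iic (0:ℝ) ∪ Ici 1)) := by
    refine Dense.mono ?_ (Rat.denseRange_cast (𝕜 := ℝ))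
    rintro x hx
    by_cases h0 : x ≤ 0
    · exact Or.inr (Or.inl h0)
    by_cases h1 : 1 ≤ x
    · exact Or.inr (Or.inr h1)
    push Not at h0 h1
    left
    have hm : x ∈ Set.Icc (0:ℝ) 1 ∩ Set.range ((↑) : ℚ → ℝ) := ⟨⟨h0.le, h1.le⟩, hx⟩
    rw [← hf] at hm
    exact hm.2.continuousAt (Icc_mem_nhds h0 h1)
  obtain ⟨x, hx, ⟨hxc, hxi⟩⟩ := (hD.inter_of_Gδ hG IsGδ.setOfPred_irrational
    dense_irrational).inter_open_nonempty (Ioo (0:ℝ) 1) isOpen_Ioo ⟨1/2, by norm_num, by norm_num⟩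
  rcases hxc with hc | hc | hc
  · have hm : x ∈ {x ∈ Set.Icc (0:ℝ) 1 | ContinuousWithinAt f (Set.Icc 0 1) x} :=
      ⟨⟨hx.1.le, hx.2.le⟩, ContinuousAt.continuousWithinAt hc⟩
    rw [hf] at hm
    exact hxi hm.2
  · exact absurd hx.1 (not_lt.2 hc)
  · exact absurd hx.2 (not_lt.2 hc)
end

section
/- Let f : [0,1] → ℝ be regulated with f(x) > 0 for every x ∈ [0,1]. Then there exist N ∈ ℕ and x ∈ [0,1] such that f(y) ≥ 2^{−N} for every y ∈ [0,1] with |y − x| < 2^{−N}. -/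
open Set Filter Topology

/-- For a regulated `f : [0,1] → ℝ` with `f(x) > 0` on `[0,1]`, there are
`N ∈ ℕ` and `x ∈ [0,1]` such that `f(y) ≥ 2^(-N)` for all `y ∈ [0,1]` with
`|y - x| < 2^(-N)`. -/
theorem regulated_pos_uniformly_on_ball (f : ℝ → ℝ)
    (hfr : ∀ x ∈ Set.Ico (0:ℝ) 1, ∃ L : ℝ, Tendsto f (𝓝[Set.Ioc x 1] x) (𝓝 L))
    (hfl : ∀ x ∈ Set.Ioc (0:ℝ) 1, ∃ L : ℝ, Tendsto f (𝓝[Set.Ico 0 x] x) (𝓝 L))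
    (hpos : ∀ x ∈ Set.Icc (0:ℝ) 1, 0 < f x) :
    ∃ N : ℕ, ∃ x ∈ Set.Icc (0:ℝ) 1,
      ∀ y ∈ Set.Icc (0:ℝ) 1, |y - x| < (2:ℝ) ^ (-(N:ℤ)) → (2:ℝ) ^ (-(N:ℤ)) ≤ f y := by
  let A : ℕ → Set ℝ := fun n => {y | (2:ℝ) ^ (-(n:ℤ)) ≤ f y}
  have hsmall : ∀ e : ℝ, 0 < e → ∃ n : ℕ, (2:ℝ) ^ (-(n:ℤ)) < e := by
    intro e he
    obtain ⟨n, hn⟩ := exists_pow_lt_of_lt_one he (by norm_num : (1/2:ℝ) < 1)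
    refine ⟨n, ?_⟩
    rw [zpow_neg, zpow_natCast, ← inv_pow]
    simpa using hn
  have hd : Dense (⋃ n, interior (closure (A n) ∪ (Iic 0 ∪ Ici 1))) := by
    apply dense_iUnion_interior_of_closed
    · intro n
      exact isClosed_closure.union (isClosed_Iic.union isClosed_Ici)
    · rw [eq_univ_iff_forall]
      intro x
      rw [mem_iUnion]
      by_cases hx : x ∈ Icc (0:ℝ) 1
      · obtain ⟨n, hn⟩ := hsmall (f x) (hpos x hx)
        exact ⟨n, Or.inl (subset_closure hn.le)⟩
      · refine ⟨0, Or.inr ?_⟩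
        rw [mem_Icc, not_and_or, not_le, not_le] at hx
        rcases hx with h | h
        · exact Or.inl h.le
        · exact Or.inr h.le
  obtain ⟨x, ⟨hx0, hx1⟩, hxU⟩ := hd.inter_open_nonempty (Ioo (0:ℝ) 1) isOpen_Ioo
    ⟨1/2, by norm_num, by norm_num⟩
  rw [mem_iUnion] at hxU
  obtain ⟨n, hn⟩ := hxU
  have hc : (0:ℝ) < (2:ℝ) ^ (-(n:ℤ)) := by positivity
  obtain ⟨L, hL⟩ := hfr x ⟨hx0.le, hx1⟩
  rw [nhdsWithin_Ioc_eq_nhdsGT hx1] at hL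
  have hLc : (2:ℝ) ^ (-(n:ℤ)) ≤ L := by
    by_contra! hlt
    have h1 := hL.eventually_lt_const hlt
    obtain ⟨u, hu, hsub⟩ := mem_nhdsGT_iff_exists_Ioo_subset.1 h1
    have h2 : ∀ᶠ y in 𝓝[>] x, y ∈ closure (A n) ∪ (Iic 0 ∪ Ici 1) :=
      nhdsWithin_le_nhds (mem_interior_iff_mem_nhds.1 hn)
    obtain ⟨y, ⟨hy, hyu⟩, hy1⟩ :=
      ((h2.and (Ioo_mem_nhdsGT hu)).and (Ioo_mem_nhdsGT hx1)).exists
    rcases hy with hy | hy | hy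
    · obtain ⟨z, hz, hzA⟩ := mem_closure_iff.1 hy (Ioo x u) isOpen_Ioo hyu
      have hlt2 : f z < (2:ℝ) ^ (-(n:ℤ)) := hsub hz
      have hge : (2:ℝ) ^ (-(n:ℤ)) ≤ f z := hzA
      exact absurd hge (not_le.2 hlt2)
    · exact absurd (lt_trans hx0 hy1.1) (not_lt.2 hy)
    · exact absurd hy1.2 (not_lt.2 hy)
  have h3 := hL.eventually_const_lt (lt_of_lt_of_le (half_lt_self hc) hLc)
  obtain ⟨u, hu, hsub⟩ := mem_nhdsGT_iff_exists_Ioo_subset.1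
    (h3.and (Ioo_mem_nhdsGT hx1))
  have hu' : x < u := hu
  obtain ⟨N, hN⟩ := hsmall (min ((2:ℝ) ^ (-(n:ℤ)) / 2) ((u - x) / 2))
    (lt_min (by positivity) (by linarith))
  rw [lt_min_iff] at hN
  have hm : (x + u) / 2 ∈ Ioo x u := ⟨by linarith, by linarith⟩
  have hm1 := (hsub hm).2
  refine ⟨N, (x + u) / 2, ⟨(hx0.trans hm1.1).le, hm1.2.le⟩, ?_⟩
  intro y _ hyx
  rw [abs_lt] at hyx
  have hy : y ∈ Ioo x u := ⟨by linarith [hyx.1, hN.2], by linarith [hyx.2, hN.2]⟩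
  exact (hN.1.trans (hsub hy).1).le
end

section
/- Let (X_n)_{n∈ℕ} be an increasing sequence (X_n ⊆ X_{n+1}) of closed subsets of [0,1], and define h : [0,1] → ℝ by h(x) = 2^{−n} if n is the least index with x ∈ X_n, and h(x) = 0 if x ∉ ⋃_{n∈ℕ} X_n. Then h is upper semicontinuous on [0,1] and cliquish at every point of [0,1]. -/
open Set Filter Topology
open scoped Classical

/-- The function `h` of the paper: `h(x) = 2^(-n)` if `n` is the least index with
`x ∈ X n`, and `h(x) = 0` if `x` belongs to no `X n`. -/
noncomputable def hFun (X : ℕ → Set ℝ) (x : ℝ) : ℝ :=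
  if hx : ∃ n, x ∈ X n then (2:ℝ) ^ (-(Nat.find hx : ℤ)) else 0

theorem hFun_nonneg (X : ℕ → Set ℝ) (x : ℝ) : 0 ≤ hFun X x := by
  unfold hFun
  split_ifs
  · positivity
  · exact le_rfl

theorem hFun_le_one (X : ℕ → Set ℝ) (x : ℝ) : hFun X x ≤ 1 := by
  unfold hFun
  split_ifs
  · exact zpow_le_one_of_nonpos₀ (by norm_num) (by simp)
  · norm_num

theorem hFun_eq (X : ℕ → Set ℝ) (x : ℝ) (n : ℕ) (hn : x ∈ X n) (hm : ∀ m < n, x ∉ X m) :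
    hFun X x = (2:ℝ) ^ (-(n : ℤ)) := by
  have hx : ∃ n, x ∈ X n := ⟨n, hn⟩
  have h : Nat.find hx = n := (Nat.find_eq_iff hx).2 ⟨hn, hm⟩
  unfold hFun
  rw [dif_pos hx, h]

theorem hFun_le (X : ℕ → Set ℝ) (hX : Monotone X) (x : ℝ) (n : ℕ) (hn : x ∉ X n) :
    hFun X x ≤ (2:ℝ) ^ (-((n + 1 : ℕ) : ℤ)) := by
  unfold hFun
  split_ifs with hx
  · have h : n + 1 ≤ Nat.find hx := by
      by_contra! hlt
      exact hn (hX (Nat.lt_succ_iff.1 hlt) (Nat.find_spec hx))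
    apply zpow_le_zpow_right₀ (by norm_num)
    omega
  · positivity

theorem exists_small (ε : ℝ) (hε : 0 < ε) : ∃ n : ℕ, (2:ℝ) ^ (-((n + 1 : ℕ) : ℤ)) < ε := by
  obtain ⟨n, hn⟩ := exists_pow_lt_of_lt_one hε (by norm_num : (1/2:ℝ) < 1)
  refine ⟨n, lt_of_le_of_lt ?_ hn⟩
  rw [zpow_neg, zpow_natCast, one_div, inv_pow]
  gcongr <;> norm_num

/-- for an increasing sequence of closed subsets of `[0,1]`, the function
`h` is upper semicontinuous on `[0,1]` and cliquish at every point of `[0,1]`. -/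
theorem hFun_usco_and_cliquish (X : ℕ → Set ℝ)
    (hcl : ∀ n, IsClosed (X n)) (hsub : ∀ n, X n ⊆ Set.Icc 0 1)
    (hmono : ∀ n, X n ⊆ X (n + 1)) :
    UpperSemicontinuousOn (hFun X) (Set.Icc 0 1) ∧
    ∀ x ∈ Set.Icc (0:ℝ) 1, CliquishAt (hFun X) x := by
  have hX : Monotone X := monotone_nat_of_le_succ hmono
  constructor
  · intro x _ y hy
    have key : ∀ n, x ∉ X n → (2:ℝ) ^ (-((n + 1 : ℕ) : ℤ)) < y →
        ∀ᶠ z in 𝓝[Set.Icc 0 1] x, hFun X z < y := by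
      intro n hn hlt
      have h1 : ∀ᶠ z in 𝓝[Set.Icc 0 1] x, z ∈ (X n)ᶜ :=
        mem_nhdsWithin_of_mem_nhds ((hcl n).isOpen_compl.mem_nhds hn)
      filter_upwards [h1] with z hz
      exact (hFun_le X hX z n hz).trans_lt hlt
    by_cases hx : ∃ n, x ∈ X n
    · have he := hFun_eq X x (Nat.find hx) (Nat.find_spec hx) (fun m hm => Nat.find_min hx hm)
      rcases hk : Nat.find hx with _ | k
      · rw [hk] at he
        refine Eventually.of_forall fun z => (hFun_le_one X z).trans_lt ?_
        simpa [he] using hy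
      · rw [hk] at he
        exact key k (Nat.find_min hx (by omega)) (he ▸ hy)
    · obtain ⟨n, hn⟩ := exists_small y ((hFun_nonneg X x).trans_lt hy)
      exact key n (fun h => hx ⟨n, h⟩) hn
  · intro x hxI ε hε U hU hxU
    obtain ⟨N, hN⟩ := exists_small ε hε
    by_cases hP : ∃ n, ∃ O : Set ℝ, IsOpen O ∧ (O ∩ Set.Icc 0 1).Nonempty ∧
      O ∩ Set.Icc 0 1 ⊆ U ∧ O ∩ Set.Icc 0 1 ⊆ X n
    · obtain ⟨O, hO, hne, hOU, hOX⟩ := Nat.find_spec hP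
      have hmin := fun m => Nat.find_min hP (m := m)
      generalize Nat.find hP = n at hOX hmin
      suffices h : ∃ O' : Set ℝ, IsOpen O' ∧ (O' ∩ Set.Icc 0 1).Nonempty ∧ O' ⊆ O ∧
          ∀ z ∈ O', ∀ m < n, z ∉ X m by
        obtain ⟨O', hO', hne', hs, hz⟩ := h
        have hsI : O' ∩ Set.Icc 0 1 ⊆ O ∩ Set.Icc 0 1 := Set.inter_subset_inter_left _ hs
        refine ⟨O', hO', hne', hsI.trans hOU, fun y hy z hz' => ?_⟩
        rw [hFun_eq X y n (hOX (hsI hy)) (hz y hy.1), hFun_eq X z n (hOX (hsI hz')) (hz z hz'.1)]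
        simpa using hε
      rcases n with _ | k
      · exact ⟨O, hO, hne, subset_rfl, fun z _ m hm => absurd hm (by omega)⟩
      · have h1 : ¬ O ∩ Set.Icc 0 1 ⊆ X k := fun h =>
          hmin k (by omega) ⟨O, hO, hne, hOU, h⟩
        obtain ⟨w, hw, hwX⟩ := Set.not_subset.1 h1
        refine ⟨O ∩ (X k)ᶜ, hO.inter (hcl k).isOpen_compl, ⟨w, ⟨hw.1, hwX⟩, hw.2⟩,
          Set.inter_subset_left, fun z hz m hm hzm => hz.2 (hX (by omega) hzm)⟩
    · have h1 : ¬ U ∩ Set.Icc 0 1 ⊆ X N := fun h =>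
        hP ⟨N, U, hU, ⟨x, hxU, hxI⟩, Set.inter_subset_left, h⟩
      obtain ⟨w, hw, hwX⟩ := Set.not_subset.1 h1
      refine ⟨U ∩ (X N)ᶜ, hU.inter (hcl N).isOpen_compl, ⟨w, ⟨hw.1, hwX⟩, hw.2⟩,
        fun z hz => hz.1.1, fun y hy z hz => ?_⟩
      have a := hFun_le X hX y N hy.1.2
      have b := hFun_le X hX z N hz.1.2
      have c := hFun_nonneg X y
      have d := hFun_nonneg X z
      rw [abs_lt]
      constructor <;> linarith
end
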